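/- Fix λ ∈ (0,1/2) and δ > 0. There exist constants γ, τ > 0 and n₀ ∈ ℕ (depending only on λ, δ) such that the following holds for all n ≥ n₀ and p ∈ (λ, 1−λ). If f : {0,1}^{2n} → {0,1} has total influence I^{(p)}(f) ≤ γ·n and some coordinate i with Inf_i^{(p)}(f) ≥ δ, then for a uniformly random 2-to-1 minor map π : [2n] → [n], with probability at least τ the minor f^π satisfies Inf_{π(i)}^{(p)}(f^π) ≥ τ. -/

import Mathlib

open Finset
open scoped Classical

noncomputable def w (p : ℝ) (b : Bool) : ℝ := if b then p else 1 - p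

noncomputable def mu (p : ℝ) {n : ℕ} (x : Fin n → Bool) : ℝ := ∏ i, w p (x i)

def bflip {n : ℕ} (x : Fin n → Bool) (i : Fin n) : Fin n → Bool :=
  Function.update x i (!(x i))

/-- `Inf_i^{(p)}(f) = p(1−p)·Pr_{μ_p}[f(x) ≠ f(x⊕i)]` -/
noncomputable def pinf (p : ℝ) {n : ℕ} (f : (Fin n → Bool) → Bool) (i : Fin n) : ℝ :=
  p * (1 - p) * ∑ x : Fin n → Bool, if f x ≠ f (bflip x i) then mu p x else 0

/-- total influence `I^{(p)}(f) = ∑_i Inf_i^{(p)}(f)` -/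
noncomputable def totalInf (p : ℝ) {n : ℕ} (f : (Fin n → Bool) → Bool) : ℝ :=
  ∑ i, pinf p f i

/-- A 2-to-1 map `π : [2n] → [n]`: every fiber has exactly two elements. -/
abbrev IsTwoToOne {n : ℕ} (π : Fin (2*n) → Fin n) : Prop :=
  ∀ j : Fin n, (Finset.univ.filter (fun i => π i = j)).card = 2

/-- The probability that a binomial variable with parameters `n` and `p` equals `k`. -/
noncomputable def binomialMass (n : ℕ) (p : ℝ) (k : ℕ) : ℝ :=
  (n.choose k : ℝ) * p ^ k * (1 - p) ^ (n - k)

lemma binomialMass_nonneg {p : ℝ} (h0 : 0 ≤ p) (h1 : p ≤ 1) (n k : ℕ) :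
    0 ≤ binomialMass n p k := by
  have : 0 ≤ 1 - p := by linarith
  unfold binomialMass; positivity

lemma binomialMass_pos {p : ℝ} (h0 : 0 < p) (h1 : p < 1) {n k : ℕ} (hk : k ≤ n) :
    0 < binomialMass n p k := by
  have : 0 < 1 - p := by linarith
  have := Nat.choose_pos hk
  unfold binomialMass; positivity

lemma sum_binomialMass (n : ℕ) (p : ℝ) : ∑ k ∈ range (n + 1), binomialMass n p k = 1 := by
  have := add_pow p (1 - p) n
  rw [add_sub_cancel, one_pow] at this
  rw [this]
  exact sum_congr rfl fun k _ => by unfold binomialMass; ring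

lemma sum_neg_one_pow_mul_binomialMass (n : ℕ) (p : ℝ) :
    ∑ k ∈ range (n + 1), (-1) ^ k * binomialMass n p k = (1 - 2 * p) ^ n := by
  have := add_pow (-p) (1 - p) n
  rw [show -p + (1 - p) = 1 - 2 * p by ring] at this
  rw [this]
  refine sum_congr rfl fun k _ => ?_
  rw [neg_pow]
  unfold binomialMass; ring

lemma sum_sq_mul_binomialMass (n : ℕ) (p : ℝ) :
    ∑ k ∈ range (n + 1), ((k : ℝ) - n * p) ^ 2 * binomialMass n p k = n * p * (1 - p) := by
  have := congrArg (Polynomial.eval p) (bernsteinPolynomial.variance ℝ n)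
  simp only [Polynomial.eval_finsetSum, bernsteinPolynomial, Polynomial.eval_mul,
    Polynomial.eval_pow, Polynomial.eval_sub, Polynomial.eval_X, Polynomial.eval_one,
    Polynomial.eval_natCast, nsmul_eq_mul] at this
  rw [← this]
  refine sum_congr rfl fun k _ => ?_
  unfold binomialMass; ring

/-- Chebyshev's inequality for the binomial distribution. -/
lemma sum_tail_binomialMass_le {p : ℝ} (h0 : 0 ≤ p) (h1 : p ≤ 1) (n : ℕ) {t : ℝ} (ht : 0 < t) :
    ∑ k ∈ (range (n + 1)).filter (fun k : ℕ => ¬ |(k : ℝ) - n * p| ≤ t), binomialMass n p k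
      ≤ n * p * (1 - p) / t ^ 2 := by
  rw [le_div_iff₀ (by positivity), sum_mul, ← sum_sq_mul_binomialMass, sum_filter]
  refine sum_le_sum fun k _ => ?_
  have hB := binomialMass_nonneg h0 h1 n k
  split_ifs with h
  · positivity
  · rw [mul_comm]
    refine mul_le_mul_of_nonneg_right ?_ hB
    rw [← sq_abs ((k : ℝ) - n * p)]
    push Not at h
    exact pow_le_pow_left₀ ht.le h.le 2

lemma sum_range_two_mul (g : ℕ → ℝ) (n : ℕ) :
    ∑ k ∈ range (n + 1), g (2 * k) = ∑ m ∈ range (2 * n + 1), if Even m then g m else 0 := by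
  induction n with
  | zero => simp
  | succ n ih =>
    rw [sum_range_succ, ih, show 2 * (n + 1) + 1 = 2 * n + 1 + 1 + 1 by ring,
      sum_range_succ _ (2 * n + 1 + 1), sum_range_succ _ (2 * n + 1)]
    have h1 : ¬ Even (2 * n + 1) := by simp
    have h2 : Even (2 * n + 1 + 1) := by simp [parity_simps]
    rw [if_neg h1, if_pos h2, show 2 * (n + 1) = 2 * n + 1 + 1 by ring]
    ring

lemma half_le_sum_binomialMass_two_mul (n : ℕ) (p : ℝ) :
    1 / 2 ≤ ∑ k ∈ range (n + 1), binomialMass (2 * n) p (2 * k) := by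
  rw [sum_range_two_mul (binomialMass (2 * n) p)]
  have h1 := sum_binomialMass (2 * n) p
  have h2 := sum_neg_one_pow_mul_binomialMass (2 * n) p
  have h3 : 0 ≤ (1 - 2 * p) ^ (2 * n) := (even_two_mul n).pow_nonneg _
  have h4 : 2 * ∑ m ∈ range (2 * n + 1), (if Even m then binomialMass (2 * n) p m else 0)
      = ∑ m ∈ range (2 * n + 1), binomialMass (2 * n) p m
        + ∑ m ∈ range (2 * n + 1), (-1) ^ m * binomialMass (2 * n) p m := by
    rw [mul_sum, ← sum_add_distrib]
    refine sum_congr rfl fun m _ => ?_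
    rcases Nat.even_or_odd m with h | h
    · rw [if_pos h, h.neg_one_pow]; ring
    · rw [if_neg (Nat.not_even_iff_odd.mpr h), h.neg_one_pow]; ring
  linarith

lemma sum_window_binomialMass_ge {p : ℝ} (h0 : 0 ≤ p) (h1 : p ≤ 1) {n : ℕ} (hn : 0 < n) {C : ℝ}
    (hC : 1 ≤ C) :
    3 / 4 ≤ ∑ k ∈ (range (n + 1)).filter (fun k : ℕ => |(k : ℝ) - n * p| ≤ C * √n), binomialMass n p k := by
  have hn' : (0 : ℝ) < n := by exact_mod_cast hn
  have h := sum_filter_add_sum_filter_not (range (n + 1))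
    (fun k : ℕ => |(k : ℝ) - n * p| ≤ C * √n) (binomialMass n p)
  have ht := sum_tail_binomialMass_le h0 h1 n (t := C * √n) (by positivity)
  rw [sum_binomialMass] at h
  have : n * p * (1 - p) / (C * √n) ^ 2 ≤ 1 / 4 := by
    rw [mul_pow, Real.sq_sqrt hn'.le, div_le_div_iff₀ (by positivity) (by norm_num)]
    have h2 : p * (1 - p) * 4 ≤ C ^ 2 := by nlinarith [sq_nonneg (2 * p - 1)]
    nlinarith
  linarith

lemma sum_window_binomialMass_two_mul_ge {p : ℝ} (h0 : 0 ≤ p) (h1 : p ≤ 1) {n : ℕ} (hn : 0 < n)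
    {C : ℝ} (hC : 1 ≤ C) :
    1 / 4 ≤ ∑ k ∈ (range (n + 1)).filter (fun k : ℕ => |(k : ℝ) - n * p| ≤ C * √n),
      binomialMass (2 * n) p (2 * k) := by
  have hn' : (0 : ℝ) < n := by exact_mod_cast hn
  have h := sum_filter_add_sum_filter_not (range (n + 1))
    (fun k : ℕ => |(k : ℝ) - n * p| ≤ C * √n) (fun k => binomialMass (2 * n) p (2 * k))
  have ht := sum_tail_binomialMass_le h0 h1 (2 * n) (t := 2 * (C * √n)) (by positivity)
  have hh := half_le_sum_binomialMass_two_mul n p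
  have : (2 * n : ℕ) * p * (1 - p) / (2 * (C * √n)) ^ 2 ≤ 1 / 4 := by
    rw [mul_pow, mul_pow, Real.sq_sqrt hn'.le, div_le_div_iff₀ (by positivity) (by norm_num)]
    push_cast
    have h2 : p * (1 - p) * 4 ≤ C ^ 2 := by nlinarith [sq_nonneg (2 * p - 1)]
    nlinarith
  have hle : ∑ k ∈ (range (n + 1)).filter (fun k : ℕ => ¬ |(k : ℝ) - n * p| ≤ C * √n), binomialMass (2 * n) p (2 * k)
      ≤ ∑ k ∈ (range (2 * n + 1)).filter (fun k : ℕ => ¬ |(k : ℝ) - (2 * n : ℕ) * p| ≤ 2 * (C * √n)),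
        binomialMass (2 * n) p k := by
    have he := sum_range_two_mul (fun m => if ¬ |(m : ℝ) - (2 * n : ℕ) * p| ≤ 2 * (C * √n) then
        binomialMass (2 * n) p m else 0) n
    have hB := binomialMass_nonneg h0 h1 (2 * n)
    calc _ = ∑ k ∈ range (n + 1), if ¬ |((2 * k : ℕ) : ℝ) - (2 * n : ℕ) * p| ≤ 2 * (C * √n) then
        binomialMass (2 * n) p (2 * k) else 0 := by
          rw [sum_filter]
          refine sum_congr rfl fun k _ => ?_
          have : ((2 * k : ℕ) : ℝ) - (2 * n : ℕ) * p = 2 * ((k : ℝ) - n * p) := by push_cast; ring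
          rw [this, abs_mul, abs_two]
          simp only [mul_le_mul_iff_right₀ (zero_lt_two (α := ℝ))]
      _ = _ := he
      _ ≤ _ := by
          rw [sum_filter]
          refine sum_le_sum fun m _ => ?_
          have := hB m
          split_ifs <;> first | exact le_rfl | assumption
  linarith

lemma binomialMass_succ (n k : ℕ) (p : ℝ) (hk : k < n) :
    (k + 1) * (1 - p) * binomialMass n p (k + 1) = (n - k) * p * binomialMass n p k := by
  have h : (n.choose (k + 1) : ℝ) * (k + 1) = n.choose k * (n - k) := by
    have := Nat.choose_succ_right_eq n k
    rw [← Nat.cast_sub hk.le]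
    exact_mod_cast this
  unfold binomialMass
  rw [show n - k = n - (k + 1) + 1 by omega]
  linear_combination p ^ (k + 1) * (1 - p) ^ (n - (k + 1) + 1) * h

lemma binomialMass_ratio_succ {p : ℝ} (h0 : 0 < p) (h1 : p < 1) {n k : ℕ} (hk : k < n) :
    binomialMass n p (k + 1) / binomialMass (2 * n) p (2 * (k + 1)) * ((2 * n - 2 * k - 1) * p)
      = binomialMass n p k / binomialMass (2 * n) p (2 * k) * ((2 * k + 1) * (1 - p)) := by
  have e1 := binomialMass_succ n k p hk
  have e2 := binomialMass_succ (2 * n) (2 * k) p (by omega)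
  have e3 := binomialMass_succ (2 * n) (2 * k + 1) p (by omega)
  have t0 := binomialMass_pos h0 h1 (n := 2 * n) (k := 2 * k) (by omega)
  have t1 := binomialMass_pos h0 h1 (n := 2 * n) (k := 2 * k + 1) (by omega)
  have t2 := binomialMass_pos h0 h1 (n := 2 * n) (k := 2 * (k + 1)) (by omega)
  rw [show 2 * k + 1 + 1 = 2 * (k + 1) by ring] at e3
  push_cast at e2 e3
  rw [div_mul_eq_mul_div, div_mul_eq_mul_div, div_eq_div_iff t2.ne' t0.ne']
  have hkn : (k : ℝ) < n := by exact_mod_cast hk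
  have hq : 0 < 1 - p := by linarith
  have hc : (0 : ℝ) < 2 * (k + 1) * (1 - p) * binomialMass (2 * n) p (2 * k + 1) := by positivity
  apply mul_left_cancel₀ hc.ne'
  generalize binomialMass n p (k + 1) = s1 at *
  generalize binomialMass n p k = s0 at *
  generalize binomialMass (2 * n) p (2 * k + 1) = b at *
  generalize binomialMass (2 * n) p (2 * k) = a at *
  generalize binomialMass (2 * n) p (2 * (k + 1)) = c at *
  have e4 : (2 * k + 2) * (1 - p) * c = (2 * n - (2 * k + 1)) * p * b := by
    linear_combination e3
  linear_combination (2 * b * (2 * n - 2 * k - 1) * p * a) * e1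
    - (2 * ((n : ℝ) - k) * p * s0 * a) * e4
    - (s0 * (2 * k + 2) * (1 - p) * c) * e2

lemma abs_add_le_sub_of_window {n k : ℕ} {p t : ℝ} (hk : |(k : ℝ) - n * p| ≤ t)
    (hk' : |((k + 1 : ℕ) : ℝ) - n * p| ≤ t) : |2 * n * p - 2 * k - 1| ≤ 2 * t := by
  rw [abs_le] at *
  push_cast at hk'
  constructor <;> linarith [hk.1, hk.2, hk'.1, hk'.2]

lemma geometric_comparison {r : ℕ → ℝ} {P : ℕ → Prop} {c : ℝ} (hc : 0 ≤ c)
    (hP : ∀ a b k, P a → P b → a ≤ k → k ≤ b → P k)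
    (hr : ∀ k, P k → P (k + 1) → r (k + 1) ≤ c * r k ∧ r k ≤ c * r (k + 1)) (k d : ℕ)
    (hk : P k) (hkd : P (k + d)) : r (k + d) ≤ c ^ d * r k ∧ r k ≤ c ^ d * r (k + d) := by
  induction d with
  | zero => simp
  | succ d ih =>
    have hd : P (k + d) := hP k (k + (d + 1)) _ hk hkd (by omega) (by omega)
    obtain ⟨i1, i2⟩ := ih hd
    obtain ⟨j1, j2⟩ := hr (k + d) hd hkd
    constructor
    · calc r (k + (d + 1)) ≤ c * r (k + d) := j1
        _ ≤ c * (c ^ d * r k) := by gcongr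
        _ = _ := by ring
    · calc r k ≤ c ^ d * r (k + d) := i2
        _ ≤ c ^ d * (c * r (k + (d + 1))) := by gcongr; exact j2
        _ = _ := by ring

/-- On a window of width `O(√n)` around the mean, the binomial masses of `k` (among `n`) and
of `2 * k` (among `2 * n`) agree up to a constant factor. -/
lemma binomialMass_comparison {lam C : ℝ} (hl0 : 0 < lam) (hC : 1 ≤ C) :
    ∃ K : ℝ, 0 < K ∧ ∀ n : ℕ, 0 < n → C * √n ≤ lam / 2 * n → ∀ p ∈ Set.Ioo lam (1 - lam),
      ∀ k : ℕ, |(k : ℝ) - n * p| ≤ C * √n →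
        binomialMass n p k ≤ K * binomialMass (2 * n) p (2 * k) ∧
        binomialMass (2 * n) p (2 * k) ≤ K * binomialMass n p k := by
  set K := Real.exp (4 * C ^ 2 / lam ^ 2) with hK
  have hK0 : 0 < K := Real.exp_pos _
  refine ⟨4 * K, by positivity, ?_⟩
  intro n hn hCn p hp k hk
  have h0 : 0 < p := hl0.trans hp.1
  have h1 : p < 1 := by linarith [hp.2]
  have hn' : (0 : ℝ) < n := by exact_mod_cast hn
  have hs : 0 < √(n : ℝ) := Real.sqrt_pos.mpr hn'
  have hss : √(n : ℝ) * √n = n := Real.mul_self_sqrt hn'.le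
  have hlo : ∀ j : ℕ, |(j : ℝ) - n * p| ≤ C * √n → lam / 2 * n ≤ j ∧ (j : ℝ) ≤ n - lam / 2 * n := by
    intro j hj
    rw [abs_le] at hj
    constructor <;> nlinarith [hp.1, hp.2]
  have hle : ∀ j : ℕ, |(j : ℝ) - n * p| ≤ C * √n → j ≤ n := by
    intro j hj
    have : (j : ℝ) ≤ n := by nlinarith [(hlo j hj).2]
    exact_mod_cast this
  set r : ℕ → ℝ := fun k => binomialMass n p k / binomialMass (2 * n) p (2 * k) with hr
  have hrpos : ∀ j, j ≤ n → 0 < r j := fun j hj =>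
    div_pos (binomialMass_pos h0 h1 hj) (binomialMass_pos h0 h1 (by omega))
  set ε := 2 * C / (lam ^ 2 * √n) with hε
  have hε0 : 0 < ε := by positivity
  have hstep : ∀ k : ℕ, |(k : ℝ) - n * p| ≤ C * √n → |((k + 1 : ℕ) : ℝ) - n * p| ≤ C * √n →
      r (k + 1) ≤ (1 + ε) * r k ∧ r k ≤ (1 + ε) * r (k + 1) := by
    intro k hk hk'
    have hkn : k < n := hle _ hk'
    have hid := binomialMass_ratio_succ h0 h1 hkn
    have hab := abs_le.mp (abs_add_le_sub_of_window hk hk')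
    have a1 := (hlo _ hk).1
    have a2 := (hlo _ hk').2
    push_cast at a2
    have hα : lam ^ 2 * n ≤ (2 * n - 2 * k - 1) * p := by
      have : lam * n ≤ 2 * n - 2 * k - 1 := by linarith
      nlinarith [hp.1, mul_pos hl0 hn']
    have hβ : lam ^ 2 * n ≤ (2 * k + 1) * (1 - p) := by
      have : lam * n ≤ 2 * k + 1 := by linarith
      nlinarith [hp.2, mul_pos hl0 hn']
    have hεn : ε * (lam ^ 2 * n) = 2 * (C * √n) := by
      rw [hε, div_mul_eq_mul_div, div_eq_iff (by positivity)]
      linear_combination (-2 * C * lam ^ 2) * hss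
    have hdiff : (2 * n - 2 * k - 1) * p - (2 * k + 1) * (1 - p) = 2 * n * p - 2 * k - 1 := by ring
    have r0 := hrpos k hkn.le
    have r1 := hrpos (k + 1) hkn
    change r (k + 1) * _ = r k * _ at hid
    generalize (2 * (n : ℝ) - 2 * k - 1) * p = α at *
    generalize (2 * (k : ℝ) + 1) * (1 - p) = β at *
    have hpos : 0 < lam ^ 2 * n := by positivity
    have b1 : β ≤ (1 + ε) * α := by linarith [mul_le_mul_of_nonneg_left hα hε0.le, hab.1]
    have b2 : α ≤ (1 + ε) * β := by linarith [mul_le_mul_of_nonneg_left hβ hε0.le, hab.2]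
    constructor
    · refine le_of_mul_le_mul_right ?_ (hpos.trans_le hα)
      linarith [mul_le_mul_of_nonneg_left b1 r0.le]
    · refine le_of_mul_le_mul_right ?_ (hpos.trans_le hβ)
      linarith [mul_le_mul_of_nonneg_left b2 r1.le]
  have hconv : ∀ a b k : ℕ, |(a : ℝ) - n * p| ≤ C * √n → |(b : ℝ) - n * p| ≤ C * √n →
      a ≤ k → k ≤ b → |(k : ℝ) - n * p| ≤ C * √n := by
    intro a b k ha hb h1 h2
    have h1' : (a : ℝ) ≤ k := by exact_mod_cast h1
    have h2' : (k : ℝ) ≤ b := by exact_mod_cast h2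
    rw [abs_le] at *
    constructor <;> linarith [ha.1, hb.2]
  have hpow : ∀ k d : ℕ, |(k : ℝ) - n * p| ≤ C * √n → |((k + d : ℕ) : ℝ) - n * p| ≤ C * √n →
      (1 + ε) ^ d ≤ K := by
    intro k d hk hd
    have hd' : (d : ℝ) ≤ 2 * (C * √n) := by
      rw [abs_le] at *
      push_cast at hd
      linarith [hk.1, hd.2]
    calc (1 + ε) ^ d ≤ Real.exp ε ^ d := by
          gcongr
          linarith [Real.add_one_le_exp ε]
      _ = Real.exp (d * ε) := by rw [Real.exp_nat_mul]
      _ ≤ K := by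
          rw [hK]
          apply Real.exp_le_exp.mpr
          calc d * ε ≤ 2 * (C * √n) * ε := by gcongr
            _ = _ := by rw [hε]; field_simp; ring
  have hall : ∀ a b : ℕ, |(a : ℝ) - n * p| ≤ C * √n → |(b : ℝ) - n * p| ≤ C * √n →
      r a ≤ K * r b := by
    intro a b ha hb
    rcases le_total a b with h | h
    · obtain ⟨d, rfl⟩ := Nat.exists_eq_add_of_le h
      exact ((geometric_comparison (by positivity) hconv hstep a d ha hb).2).trans
        (mul_le_mul_of_nonneg_right (hpow a d ha hb) (hrpos _ (hle _ hb)).le)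
    · obtain ⟨d, rfl⟩ := Nat.exists_eq_add_of_le h
      exact ((geometric_comparison (by positivity) hconv hstep b d hb ha).1).trans
        (mul_le_mul_of_nonneg_right (hpow b d hb ha) (hrpos _ (hle _ hb)).le)
  have hcross : ∀ a b : ℕ, |(a : ℝ) - n * p| ≤ C * √n → |(b : ℝ) - n * p| ≤ C * √n →
      binomialMass n p a * binomialMass (2 * n) p (2 * b)
        ≤ K * (binomialMass n p b * binomialMass (2 * n) p (2 * a)) := by
    intro a b ha hb
    have h := hall a b ha hb
    have ta := binomialMass_pos h0 h1 (n := 2 * n) (k := 2 * a) (by have := hle a ha; omega)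
    have tb := binomialMass_pos h0 h1 (n := 2 * n) (k := 2 * b) (by have := hle b hb; omega)
    simp only [hr] at h
    rw [← mul_div_assoc, div_le_div_iff₀ ta tb] at h
    linarith
  set W := (range (n + 1)).filter (fun k : ℕ => |(k : ℝ) - n * p| ≤ C * √n)
  have hS := sum_window_binomialMass_ge h0.le h1.le hn hC
  have hT := sum_window_binomialMass_two_mul_ge h0.le h1.le hn hC
  have hS1 : ∑ j ∈ W, binomialMass n p j ≤ 1 := by
    rw [← sum_binomialMass n p]
    exact sum_le_sum_of_subset_of_nonneg (filter_subset _ _)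
      fun _ _ _ => binomialMass_nonneg h0.le h1.le _ _
  have hT1 : ∑ j ∈ W, binomialMass (2 * n) p (2 * j) ≤ 1 := by
    rw [← sum_binomialMass (2 * n) p]
    refine (sum_le_sum_of_subset_of_nonneg (filter_subset _ _)
      fun _ _ _ => binomialMass_nonneg h0.le h1.le _ _).trans ?_
    rw [sum_range_two_mul (binomialMass (2 * n) p)]
    refine sum_le_sum fun m _ => ?_
    have := binomialMass_nonneg h0.le h1.le (2 * n) m
    split_ifs <;> first | exact le_rfl | assumption
  have hs0 := binomialMass_nonneg h0.le h1.le n k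
  have ht0 := binomialMass_nonneg h0.le h1.le (2 * n) (2 * k)
  constructor
  · have h : binomialMass n p k * ∑ j ∈ W, binomialMass (2 * n) p (2 * j)
        ≤ K * ((∑ j ∈ W, binomialMass n p j) * binomialMass (2 * n) p (2 * k)) := by
      rw [mul_sum, sum_mul, mul_sum]
      exact sum_le_sum fun j hj => hcross k j hk (mem_filter.mp hj).2
    have h2 : K * ((∑ j ∈ W, binomialMass n p j) * binomialMass (2 * n) p (2 * k))
        ≤ K * (1 * binomialMass (2 * n) p (2 * k)) := by gcongr
    nlinarith
  · have h : (∑ j ∈ W, binomialMass n p j) * binomialMass (2 * n) p (2 * k)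
        ≤ K * (binomialMass n p k * ∑ j ∈ W, binomialMass (2 * n) p (2 * j)) := by
      rw [mul_sum, sum_mul, mul_sum]
      exact sum_le_sum fun j hj => hcross j k (mem_filter.mp hj).2 hk
    have h2 : K * (binomialMass n p k * ∑ j ∈ W, binomialMass (2 * n) p (2 * j))
        ≤ K * (binomialMass n p k * 1) := by gcongr
    have h3 : 0 ≤ K * binomialMass n p k := by positivity
    nlinarith

/-- The Hamming weight of a point of the cube. -/
def ones {n : ℕ} (x : Fin n → Bool) : ℕ := (univ.filter (fun i => x i = true)).card

lemma ones_le {n : ℕ} (x : Fin n → Bool) : ones x ≤ n := by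
  simpa [ones] using card_le_univ (univ.filter (fun i => x i = true))

lemma card_filter_false {n : ℕ} (x : Fin n → Bool) :
    (univ.filter (fun i => x i = false)).card = n - ones x := by
  have h := card_filter_add_card_filter_not (s := univ) (fun i => x i = true)
  simp only [Bool.not_eq_true, card_univ, Fintype.card_fin] at h
  unfold ones
  omega

lemma mu_eq {n : ℕ} (p : ℝ) (x : Fin n → Bool) :
    mu p x = p ^ ones x * (1 - p) ^ (n - ones x) := by
  rw [← card_filter_false]
  unfold mu w ones
  rw [prod_ite]
  simp

lemma mu_nonneg {n : ℕ} {p : ℝ} (h0 : 0 ≤ p) (h1 : p ≤ 1) (x : Fin n → Bool) : 0 ≤ mu p x := by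
  have : 0 ≤ 1 - p := by linarith
  rw [mu_eq]; positivity

lemma mu_mul_choose {n : ℕ} (p : ℝ) (x : Fin n → Bool) :
    mu p x * n.choose (ones x) = binomialMass n p (ones x) := by
  rw [mu_eq, binomialMass]; ring

lemma card_ones_eq (n k : ℕ) :
    (univ.filter (fun x : Fin n → Bool => ones x = k)).card = n.choose k := by
  have : n.choose k = (powersetCard k (univ : Finset (Fin n))).card := by simp
  rw [this]
  refine card_nbij' (fun x => univ.filter (fun i => x i = true)) (fun s i => decide (i ∈ s))
    ?_ ?_ ?_ ?_
  · intro x hx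
    exact mem_powersetCard.mpr ⟨subset_univ _, (mem_filter.mp hx).2⟩
  · intro s hs
    refine mem_filter.mpr ⟨mem_univ _, ?_⟩
    simpa [ones] using (mem_powersetCard.mp hs).2
  · intro x _
    ext i
    simp
  · intro s _
    ext i
    simp

lemma sum_comp_ones_mul_mu {n : ℕ} (p : ℝ) (g : ℕ → ℝ) :
    ∑ x : Fin n → Bool, g (ones x) * mu p x = ∑ k ∈ range (n + 1), g k * binomialMass n p k := by
  rw [← sum_fiberwise_of_maps_to (s := univ) (t := range (n + 1)) (g := ones)
    (fun x _ => mem_range.mpr (Nat.lt_succ_of_le (ones_le x)))]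
  refine sum_congr rfl fun k _ => ?_
  rw [sum_congr rfl (g := fun _ => g k * (p ^ k * (1 - p) ^ (n - k)))]
  · rw [sum_const, card_ones_eq, nsmul_eq_mul, binomialMass]; ring
  · intro x hx
    rw [mu_eq, (mem_filter.mp hx).2]

lemma sum_mu_tail_le {n : ℕ} {p : ℝ} (h0 : 0 ≤ p) (h1 : p ≤ 1) {t : ℝ} (ht : 0 < t) :
    ∑ x : Fin n → Bool, (if |(ones x : ℝ) - n * p| ≤ t then 0 else mu p x)
      ≤ n * p * (1 - p) / t ^ 2 := by
  refine le_trans (le_of_eq ?_) (sum_tail_binomialMass_le h0 h1 n ht)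
  have := sum_comp_ones_mul_mu (n := n) p (fun k => if |(k : ℝ) - n * p| ≤ t then 0 else 1)
  simp only [ite_mul, zero_mul, one_mul] at this
  rw [this, sum_filter]
  exact sum_congr rfl fun k _ => by simp only [ite_not]

lemma exists_perm_of_ones_eq {n : ℕ} {x x' : Fin n → Bool} (h : ones x = ones x') :
    ∃ σ : Equiv.Perm (Fin n), x = x' ∘ σ := by
  have hc : Fintype.card {i // x i = true} = Fintype.card {i // x' i = true} := by
    simpa [Fintype.card_subtype, ones] using h
  let e : {i // x i = true} ≃ {i // x' i = true} := Fintype.equivOfCardEq hc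
  refine ⟨e.extendSubtype, funext fun i => ?_⟩
  by_cases hi : x i = true
  · rw [hi]
    exact (e.extendSubtype_mem i hi).symm
  · have := e.extendSubtype_not_mem i hi
    simp only [Bool.not_eq_true] at hi this
    rw [hi]
    exact this.symm

lemma bflip_bflip {n : ℕ} (x : Fin n → Bool) (i : Fin n) : bflip (bflip x i) i = x := by
  simp [bflip]

lemma bflip_involutive {n : ℕ} (i : Fin n) :
    Function.Involutive (fun x : Fin n → Bool => bflip x i) := fun x => bflip_bflip x i

lemma sum_comp_bflip {n : ℕ} (i : Fin n) (g : (Fin n → Bool) → ℝ) :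
    ∑ x, g (bflip x i) = ∑ x, g x :=
  Equiv.sum_comp (bflip_involutive i).toPerm g

lemma even_ones_bflip {n : ℕ} (x : Fin n → Bool) (i : Fin n) :
    Even (ones (bflip x i)) ↔ ¬ Even (ones x) := by
  have key : ∀ z : Fin n → Bool, ones z = (if z i = true then 1 else 0)
      + ∑ j ∈ univ.erase i, if z j = true then 1 else 0 := by
    intro z
    rw [ones, card_filter, add_sum_erase _ (fun j => if z j = true then 1 else 0) (mem_univ i)]
  rw [key x, key (bflip x i)]
  have : ∑ j ∈ univ.erase i, (if bflip x i j = true then 1 else 0)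
      = ∑ j ∈ univ.erase i, if x j = true then 1 else 0 :=
    sum_congr rfl fun j hj => by simp [bflip, Function.update_of_ne (mem_erase.mp hj).1]
  rw [this]
  cases hx : x i <;> simp [bflip, hx, parity_simps]

lemma mul_mu_le_mu_bflip {n : ℕ} {lam p : ℝ} (hl0 : 0 < lam) (hp : p ∈ Set.Ioo lam (1 - lam))
    (x : Fin n → Bool) (i : Fin n) : lam * mu p x ≤ mu p (bflip x i) := by
  have hw : ∀ b, lam ≤ w p b ∧ w p b ≤ 1 := by
    intro b
    have := hp.1
    have := hp.2
    cases b <;> simp only [w, if_true, Bool.false_eq_true, if_false] <;> constructor <;> linarith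
  unfold mu
  rw [← mul_prod_erase _ (fun j => w p (x j)) (mem_univ i),
    ← mul_prod_erase _ (fun j => w p (bflip x i j)) (mem_univ i)]
  have : ∏ j ∈ univ.erase i, w p (bflip x i j) = ∏ j ∈ univ.erase i, w p (x j) :=
    prod_congr rfl fun j hj => by simp [bflip, Function.update_of_ne (mem_erase.mp hj).1]
  rw [this, ← mul_assoc]
  have hP : 0 ≤ ∏ j ∈ univ.erase i, w p (x j) := prod_nonneg fun j _ => hl0.le.trans (hw _).1
  refine mul_le_mul_of_nonneg_right ?_ hP
  have h1 := hw (x i)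
  have h2 := hw (bflip x i i)
  nlinarith

/-- The finite set of all two-to-one maps `[2n] → [n]`. -/
noncomputable def twoToOneMaps (n : ℕ) : Finset (Fin (2 * n) → Fin n) :=
  univ.filter (fun π => IsTwoToOne π)

lemma mem_twoToOneMaps {n : ℕ} {π : Fin (2 * n) → Fin n} :
    π ∈ twoToOneMaps n ↔ IsTwoToOne π := by simp [twoToOneMaps]

lemma twoToOneMaps_nonempty (n : ℕ) : (twoToOneMaps n).Nonempty := by
  refine ⟨fun i => (finProdFinEquiv.symm i).2, mem_twoToOneMaps.mpr fun j => ?_⟩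
  have : (univ.filter (fun i : Fin (2 * n) => (finProdFinEquiv.symm i).2 = j)).card
      = (univ : Finset (Fin 2)).card :=
    card_nbij' (fun i => (finProdFinEquiv.symm i).1) (fun a => finProdFinEquiv (a, j))
      (fun i _ => mem_univ _)
      (fun a _ => mem_filter.mpr ⟨mem_univ _, by rw [Equiv.symm_apply_apply]⟩)
      (fun i hi => by
        have : (finProdFinEquiv.symm i).2 = j := (mem_filter.mp hi).2
        rw [← this]
        exact finProdFinEquiv.apply_symm_apply i)
      (fun a _ => by simp only [Equiv.symm_apply_apply])
  simpa using this

lemma IsTwoToOne.comp_perm {n : ℕ} {π : Fin (2 * n) → Fin n} (h : IsTwoToOne π)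
    (σ : Equiv.Perm (Fin (2 * n))) : IsTwoToOne (π ∘ σ) := fun j => by
  refine Eq.trans ?_ (h j)
  exact card_nbij' σ σ.symm (fun i hi => by simpa using hi) (fun i hi => by simpa using hi)
    (fun i _ => by simp) (fun i _ => by simp)

lemma sum_twoToOneMaps_comp_perm {n : ℕ} (σ : Equiv.Perm (Fin (2 * n)))
    (g : (Fin (2 * n) → Fin n) → ℝ) :
    ∑ π ∈ twoToOneMaps n, g (π ∘ σ) = ∑ π ∈ twoToOneMaps n, g π :=
  sum_nbij' (fun π => π ∘ σ) (fun π => π ∘ σ.symm)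
    (fun π h => mem_twoToOneMaps.mpr ((mem_twoToOneMaps.mp h).comp_perm σ))
    (fun π h => mem_twoToOneMaps.mpr ((mem_twoToOneMaps.mp h).comp_perm σ.symm))
    (fun π _ => by ext; simp) (fun π _ => by ext; simp) (fun _ _ => rfl)

lemma IsTwoToOne.ones_comp {n : ℕ} {π : Fin (2 * n) → Fin n} (h : IsTwoToOne π)
    (y : Fin n → Bool) : ones (y ∘ π) = 2 * ones y := by
  unfold ones
  rw [card_eq_sum_card_fiberwise (f := π) (t := univ.filter (fun j => y j = true))
    (fun i hi => by simpa using hi)]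
  refine (sum_congr rfl (g := fun _ => 2) fun j hj => ?_).trans
    (by rw [sum_const, smul_eq_mul, mul_comm])
  refine Eq.trans ?_ (h j)
  rw [filter_filter]
  congr 1
  ext i
  have hj' : y j = true := (mem_filter.mp hj).2
  simp only [mem_filter, mem_univ, true_and, Function.comp_apply]
  exact ⟨fun hi => hi.2, fun hi => ⟨by rw [hi, hj'], hi⟩⟩

lemma IsTwoToOne.sum_partner {n : ℕ} {π : Fin (2 * n) → Fin n} (h : IsTwoToOne π)
    (i : Fin (2 * n)) (a : ℝ) : ∑ j ∈ univ.erase i, (if π j = π i then a else 0) = a := by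
  rw [← sum_filter, sum_const]
  have : ((univ.erase i).filter (fun j => π j = π i)).card = 1 := by
    rw [filter_erase, card_erase_of_mem (by simp), h (π i)]
  rw [this, one_smul]

lemma IsTwoToOne.bflip_comp {n : ℕ} {π : Fin (2 * n) → Fin n} (h : IsTwoToOne π)
    {i j : Fin (2 * n)} (hij : j ≠ i) (hπ : π j = π i) (y : Fin n → Bool) :
    bflip y (π i) ∘ π = bflip (bflip (y ∘ π) i) j := by
  have hsub : ({i, j} : Finset (Fin (2 * n))) = univ.filter (fun k => π k = π i) := by
    apply eq_of_subset_of_card_le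
    · intro k hk
      rcases mem_insert.mp hk with rfl | hk
      · simp
      · rw [mem_singleton.mp hk]; simp [hπ]
    · rw [h (π i), card_pair hij.symm]
  funext k
  by_cases hkj : k = j
  · subst hkj
    simp [bflip, hπ, Function.update_of_ne hij]
  · by_cases hki : k = i
    · subst hki
      simp [bflip, Function.update_of_ne hkj]
    · have : π k ≠ π i := by
        intro hk
        have : k ∈ ({i, j} : Finset (Fin (2 * n))) := by rw [hsub]; simp [hk]
        simp [hki, hkj] at this
      simp [bflip, Function.update_of_ne, hkj, hki, this]

/-- The mass that the law of `y ∘ π`, with `y` distributed as `mu p`, gives to the point `x`. -/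
noncomputable def pullMass (p : ℝ) {n : ℕ} (π : Fin (2 * n) → Fin n) (x : Fin (2 * n) → Bool) :
    ℝ := ∑ y : Fin n → Bool, if y ∘ π = x then mu p y else 0

lemma sum_mul_pullMass {n : ℕ} (p : ℝ) (π : Fin (2 * n) → Fin n)
    (φ : (Fin (2 * n) → Bool) → ℝ) :
    ∑ x, φ x * pullMass p π x = ∑ y, φ (y ∘ π) * mu p y := by
  simp only [pullMass, mul_sum]
  rw [sum_comm]
  refine sum_congr rfl fun y _ => ?_
  simp

lemma pullMass_nonneg {n : ℕ} {p : ℝ} (h0 : 0 ≤ p) (h1 : p ≤ 1) (π : Fin (2 * n) → Fin n)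
    (x : Fin (2 * n) → Bool) : 0 ≤ pullMass p π x :=
  sum_nonneg fun y _ => by
    have := mu_nonneg h0 h1 y
    split_ifs <;> first | exact le_rfl | assumption

lemma pullMass_comp_perm {n : ℕ} (p : ℝ) (π : Fin (2 * n) → Fin n) (x : Fin (2 * n) → Bool)
    (σ : Equiv.Perm (Fin (2 * n))) : pullMass p (π ∘ σ) (x ∘ σ) = pullMass p π x := by
  refine sum_congr rfl fun y _ => ?_
  have : y ∘ π ∘ σ = x ∘ σ ↔ y ∘ π = x := by
    rw [← Function.comp_assoc]
    exact σ.surjective.right_cancellable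
  simp only [this]

lemma sum_pullMass_eq_zero {n : ℕ} (p : ℝ) {x : Fin (2 * n) → Bool} (hx : ¬ Even (ones x)) :
    ∑ π ∈ twoToOneMaps n, pullMass p π x = 0 := by
  refine sum_eq_zero fun π hπ => sum_eq_zero fun y _ => if_neg ?_
  rintro rfl
  rw [(mem_twoToOneMaps.mp hπ).ones_comp] at hx
  exact hx (even_two_mul _)

lemma sum_pullMass_mul_choose {n : ℕ} (p : ℝ) {x : Fin (2 * n) → Bool} {k : ℕ}
    (hx : ones x = 2 * k) :
    (∑ π ∈ twoToOneMaps n, pullMass p π x) * (2 * n).choose (2 * k)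
      = (twoToOneMaps n).card * binomialMass n p k := by
  have hsymm : ∀ x' ∈ univ.filter (fun x' : Fin (2 * n) → Bool => ones x' = 2 * k),
      ∑ π ∈ twoToOneMaps n, pullMass p π x' = ∑ π ∈ twoToOneMaps n, pullMass p π x := by
    intro x' hx'
    obtain ⟨σ, rfl⟩ := exists_perm_of_ones_eq ((mem_filter.mp hx').2.trans hx.symm)
    rw [← sum_twoToOneMaps_comp_perm σ]
    exact sum_congr rfl fun π _ => pullMass_comp_perm p π x σ
  have h1 := sum_congr rfl hsymm
  rw [sum_const, card_ones_eq, nsmul_eq_mul] at h1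
  rw [mul_comm, ← h1, sum_comm, ← nsmul_eq_mul, ← sum_const]
  refine sum_congr rfl fun π hπ => ?_
  have h2 := sum_mul_pullMass p π (fun x => if ones x = 2 * k then 1 else 0)
  simp only [ite_mul, one_mul, zero_mul, (mem_twoToOneMaps.mp hπ).ones_comp] at h2
  rw [sum_filter, h2]
  have hiff : ∀ y : Fin n → Bool, 2 * ones y = 2 * k ↔ ones y = k := fun y => by omega
  simp only [hiff]
  rw [← sum_filter, sum_congr rfl (g := fun _ => p ^ k * (1 - p) ^ (n - k)), sum_const,
    card_ones_eq, nsmul_eq_mul, binomialMass]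
  · ring
  · intro y hy
    rw [mu_eq, (mem_filter.mp hy).2]

/-- The part of the averaged law of `y ∘ π` at `x` that comes from maps `π` pairing `i` and `j`. -/
noncomputable def pairedMass (p : ℝ) {n : ℕ} (i j : Fin (2 * n)) (x : Fin (2 * n) → Bool) : ℝ :=
  ∑ π ∈ twoToOneMaps n, if π j = π i then pullMass p π x else 0

lemma pairedMass_nonneg {n : ℕ} {p : ℝ} (h0 : 0 ≤ p) (h1 : p ≤ 1) (i j : Fin (2 * n))
    (x : Fin (2 * n) → Bool) : 0 ≤ pairedMass p i j x :=
  sum_nonneg fun π _ => by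
    have := pullMass_nonneg h0 h1 π x
    split_ifs <;> first | exact le_rfl | assumption

lemma sum_pairedMass {n : ℕ} (p : ℝ) (i : Fin (2 * n)) (x : Fin (2 * n) → Bool) :
    ∑ j ∈ univ.erase i, pairedMass p i j x = ∑ π ∈ twoToOneMaps n, pullMass p π x := by
  unfold pairedMass
  rw [sum_comm]
  exact sum_congr rfl fun π hπ => (mem_twoToOneMaps.mp hπ).sum_partner i _

lemma pairedMass_eq_zero {n : ℕ} (p : ℝ) {i j : Fin (2 * n)} {x : Fin (2 * n) → Bool}
    (hx : x j ≠ x i) : pairedMass p i j x = 0 := by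
  refine sum_eq_zero fun π _ => ?_
  split_ifs with h
  · refine sum_eq_zero fun y _ => if_neg ?_
    rintro rfl
    exact hx (by simp [h])
  · rfl

lemma pairedMass_swap {n : ℕ} (p : ℝ) {i j j' : Fin (2 * n)} (hj : j ≠ i) (hj' : j' ≠ i)
    {x : Fin (2 * n) → Bool} (hx : x j = x j') : pairedMass p i j x = pairedMass p i j' x := by
  unfold pairedMass
  rw [← sum_twoToOneMaps_comp_perm (Equiv.swap j j')]
  refine sum_congr rfl fun π _ => ?_
  have hxs : x ∘ Equiv.swap j j' = x := by
    funext k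
    by_cases h1 : k = j
    · simp [h1, hx]
    · by_cases h2 : k = j'
      · simp [h2, hx]
      · simp [Equiv.swap_apply_of_ne_of_ne h1 h2]
  have := pullMass_comp_perm p π x (Equiv.swap j j')
  rw [hxs] at this
  simp only [Function.comp_apply, Equiv.swap_apply_left,
    Equiv.swap_apply_of_ne_of_ne hj.symm hj'.symm, this]

lemma card_mul_pairedMass_le {n : ℕ} {p : ℝ} (h0 : 0 ≤ p) (h1 : p ≤ 1) {i j : Fin (2 * n)}
    (hj : j ≠ i) (x : Fin (2 * n) → Bool) {c : ℝ}
    (hc : c ≤ ((univ.erase i).filter (fun k => x k = x i)).card) :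
    c * pairedMass p i j x ≤ ∑ π ∈ twoToOneMaps n, pullMass p π x := by
  by_cases hx : x j = x i
  · refine (mul_le_mul_of_nonneg_right hc (pairedMass_nonneg h0 h1 i j x)).trans ?_
    rw [← sum_pairedMass p i x, ← nsmul_eq_mul, ← sum_const]
    refine (le_of_eq (sum_congr rfl fun k hk => ?_)).trans
      (sum_le_sum_of_subset_of_nonneg (filter_subset (fun k => x k = x i) _)
        fun k _ _ => pairedMass_nonneg h0 h1 i k x)
    obtain ⟨hk1, hk2⟩ := mem_filter.mp hk
    exact pairedMass_swap p hj (mem_erase.mp hk1).1 (hx.trans hk2.symm)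
  · rw [pairedMass_eq_zero p hx, mul_zero]
    exact sum_nonneg fun π _ => pullMass_nonneg h0 h1 π x

lemma min_ones_le_card_partners {n : ℕ} (x : Fin n → Bool) (i : Fin n) :
    min (ones x) (n - ones x) ≤ ((univ.erase i).filter (fun k => x k = x i)).card + 1 := by
  rw [filter_erase, card_erase_add_one (by simp)]
  cases hx : x i
  · rw [card_filter_false]; exact min_le_right _ _
  · exact min_le_left _ _

/-- The `mu p`-mass of the points at which `f` is sensitive to the coordinate `i`. -/
noncomputable def sens (p : ℝ) {n : ℕ} (f : (Fin n → Bool) → Bool) (i : Fin n) : ℝ :=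
  ∑ x : Fin n → Bool, if f x ≠ f (bflip x i) then mu p x else 0

lemma pinf_eq {n : ℕ} (p : ℝ) (f : (Fin n → Bool) → Bool) (i : Fin n) :
    pinf p f i = p * (1 - p) * sens p f i := rfl

lemma sum_mu (n : ℕ) (p : ℝ) : ∑ x : Fin n → Bool, mu p x = 1 := by
  simpa [sum_binomialMass] using sum_comp_ones_mul_mu (n := n) p (fun _ => 1)

lemma sens_nonneg {n : ℕ} {p : ℝ} (h0 : 0 ≤ p) (h1 : p ≤ 1) (f : (Fin n → Bool) → Bool)
    (i : Fin n) : 0 ≤ sens p f i :=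
  sum_nonneg fun x _ => by
    have := mu_nonneg h0 h1 x
    split_ifs <;> first | exact le_rfl | assumption

lemma sens_le_one {n : ℕ} {p : ℝ} (h0 : 0 ≤ p) (h1 : p ≤ 1) (f : (Fin n → Bool) → Bool)
    (i : Fin n) : sens p f i ≤ 1 := by
  rw [← sum_mu n p]
  refine sum_le_sum fun x _ => ?_
  have := mu_nonneg h0 h1 x
  split_ifs <;> first | exact le_rfl | assumption

lemma mul_sens_le_two_mul_sum_even {n : ℕ} {lam p : ℝ} (hl0 : 0 < lam) (hl1 : lam ≤ 1)
    (hp : p ∈ Set.Ioo lam (1 - lam)) (f : (Fin n → Bool) → Bool) (i : Fin n) :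
    lam * sens p f i
      ≤ 2 * ∑ x : Fin n → Bool,
        if f x ≠ f (bflip x i) ∧ Even (ones x) then mu p x else 0 := by
  have hn : ∀ x : Fin n → Bool, 0 ≤ mu p x :=
    mu_nonneg (hl0.trans hp.1).le (by linarith [hp.2])
  have hodd : lam * ∑ x : Fin n → Bool,
        (if f x ≠ f (bflip x i) ∧ ¬ Even (ones x) then mu p x else 0)
      ≤ ∑ x : Fin n → Bool, if f x ≠ f (bflip x i) ∧ Even (ones x) then mu p x else 0 := by
    rw [← sum_comp_bflip i, mul_sum]
    refine sum_le_sum fun x _ => ?_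
    have hiff : (f (bflip x i) ≠ f (bflip (bflip x i) i) ∧ ¬ Even (ones (bflip x i)))
        ↔ (f x ≠ f (bflip x i) ∧ Even (ones x)) := by
      rw [bflip_bflip, even_ones_bflip, not_not, ne_comm]
    simp only [hiff]
    split_ifs
    · have := mul_mu_le_mu_bflip hl0 hp (bflip x i) i
      rwa [bflip_bflip] at this
    · simp
  have hsplit : sens p f i
      = ∑ x : Fin n → Bool, (if f x ≠ f (bflip x i) ∧ Even (ones x) then mu p x else 0)
        + ∑ x : Fin n → Bool, if f x ≠ f (bflip x i) ∧ ¬ Even (ones x) then mu p x else 0 := by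
    rw [sens, ← sum_add_distrib]
    refine sum_congr rfl fun x _ => ?_
    by_cases h : f x ≠ f (bflip x i) <;> by_cases h' : Even (ones x) <;> simp [h, h']
  have hE : 0 ≤ ∑ x : Fin n → Bool,
      if f x ≠ f (bflip x i) ∧ Even (ones x) then mu p x else 0 :=
    sum_nonneg fun x _ => by
      have := hn x
      split_ifs <;> first | exact le_rfl | assumption
  rw [hsplit, mul_add]
  nlinarith

/-- The sensitivity of a minor at `π i` is bounded below by the sensitivity of `f` at `i`, minus
the sensitivity, after flipping `i`, at the partner of `i`. -/
lemma sens_minor_ge {n : ℕ} {p : ℝ} (h0 : 0 ≤ p) (h1 : p ≤ 1) {π : Fin (2 * n) → Fin n}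
    (hπ : IsTwoToOne π) (f : (Fin (2 * n) → Bool) → Bool) (i : Fin (2 * n))
    (G : (Fin (2 * n) → Bool) → Prop) :
    ∑ x, (if f x ≠ f (bflip x i) ∧ G x then 1 else 0) * pullMass p π x
      - ∑ j ∈ univ.erase i, ∑ x,
        (if f (bflip x i) ≠ f (bflip (bflip x i) j) ∧ G x then 1 else 0)
          * (if π j = π i then pullMass p π x else 0)
      ≤ sens p (fun y => f (y ∘ π)) (π i) := by
  rw [← hπ.sum_partner i (∑ x, (if f x ≠ f (bflip x i) ∧ G x then 1 else 0) * pullMass p π x),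
    ← hπ.sum_partner i (sens p _ (π i)), ← sum_sub_distrib]
  refine sum_le_sum fun j hj => ?_
  split_ifs with hij
  · rw [sum_mul_pullMass p π (fun x => if f x ≠ f (bflip x i) ∧ G x then 1 else 0),
      sum_mul_pullMass p π
        (fun x => if f (bflip x i) ≠ f (bflip (bflip x i) j) ∧ G x then 1 else 0),
      ← sum_sub_distrib]
    refine sum_le_sum fun y _ => ?_
    beta_reduce
    rw [hπ.bflip_comp (mem_erase.mp hj).1 hij]
    have hy := mu_nonneg h0 h1 y
    by_cases hG : G (y ∘ π) <;>
    by_cases ha : f (y ∘ π) = f (bflip (y ∘ π) i) <;>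
    by_cases hb : f (bflip (y ∘ π) i) = f (bflip (bflip (y ∘ π) i) j) <;>
    by_cases hc : f (y ∘ π) = f (bflip (bflip (y ∘ π) i) j) <;>
    simp_all
  · simp

lemma sum_sens_minor_ge {n : ℕ} {p : ℝ} (h0 : 0 ≤ p) (h1 : p ≤ 1)
    (f : (Fin (2 * n) → Bool) → Bool) (i : Fin (2 * n)) (G : (Fin (2 * n) → Bool) → Prop) :
    ∑ x, (if f x ≠ f (bflip x i) ∧ G x then 1 else 0) * ∑ π ∈ twoToOneMaps n, pullMass p π x
      - ∑ j ∈ univ.erase i, ∑ x,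
        (if f (bflip x i) ≠ f (bflip (bflip x i) j) ∧ G x then 1 else 0) * pairedMass p i j x
      ≤ ∑ π ∈ twoToOneMaps n, sens p (fun y => f (y ∘ π)) (π i) := by
  refine le_trans (le_of_eq ?_) (sum_le_sum fun π hπ =>
    sens_minor_ge h0 h1 (mem_twoToOneMaps.mp hπ) f i G)
  rw [sum_sub_distrib]
  congr 1
  · rw [sum_comm]
    simp only [mul_sum]
  · symm
    rw [sum_comm]
    refine sum_congr rfl fun j _ => ?_
    rw [sum_comm]
    simp only [pairedMass, mul_sum]

/-- Near the middle of the binomial window, the averaged law of `y ∘ π` is comparable with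
`mu p` on points of even weight. -/
lemma sum_pullMass_comparison {n k : ℕ} {p K : ℝ} {x : Fin (2 * n) → Bool}
    (hx : ones x = 2 * k)
    (h1 : binomialMass n p k ≤ K * binomialMass (2 * n) p (2 * k))
    (h2 : binomialMass (2 * n) p (2 * k) ≤ K * binomialMass n p k) :
    ∑ π ∈ twoToOneMaps n, pullMass p π x ≤ K * (twoToOneMaps n).card * mu p x ∧
    (twoToOneMaps n).card * mu p x ≤ K * ∑ π ∈ twoToOneMaps n, pullMass p π x := by
  have hV := sum_pullMass_mul_choose p hx
  have hM := mu_mul_choose p x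
  rw [hx] at hM
  have hc : (0 : ℝ) < (2 * n).choose (2 * k) := by
    have := Nat.choose_pos (hx ▸ ones_le x : 2 * k ≤ 2 * n)
    exact_mod_cast this
  have hN : (0 : ℝ) ≤ (twoToOneMaps n).card := Nat.cast_nonneg _
  constructor <;> refine le_of_mul_le_mul_right ?_ hc
  · rw [hV, mul_assoc, hM]
    linarith [mul_le_mul_of_nonneg_left h1 hN]
  · rw [mul_assoc, hM, mul_assoc, hV]
    linarith [mul_le_mul_of_nonneg_left h2 hN]

lemma sum_sens_minor_ge_of_comparison {n : ℕ} {lam p K : ℝ} (hl0 : 0 < lam) (hK : 0 < K)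
    (hn : 2 ≤ lam * n) (hp : p ∈ Set.Ioo lam (1 - lam)) {t : ℝ} (ht : 0 < t)
    (htn : t ≤ lam / 2 * n)
    (hcomp : ∀ k : ℕ, |(k : ℝ) - n * p| ≤ t →
        binomialMass n p k ≤ K * binomialMass (2 * n) p (2 * k) ∧
        binomialMass (2 * n) p (2 * k) ≤ K * binomialMass n p k)
    (f : (Fin (2 * n) → Bool) → Bool) (i : Fin (2 * n)) :
    (twoToOneMaps n).card * ((lam / 2 * sens p f i - n * p * (1 - p) / (2 * t ^ 2)) / K
        - 2 * K / (lam ^ 2 * n) * ∑ j, sens p f j)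
      ≤ ∑ π ∈ twoToOneMaps n, sens p (fun y => f (y ∘ π)) (π i) := by
  have h0 : 0 ≤ p := (hl0.trans hp.1).le
  have h1 : p ≤ 1 := by linarith [hp.2]
  have hn' : (0 : ℝ) < n := by
    by_contra h
    nlinarith
  have hN : (0 : ℝ) ≤ (twoToOneMaps n).card := Nat.cast_nonneg _
  set N : ℝ := ((twoToOneMaps n).card : ℝ)
  set G : (Fin (2 * n) → Bool) → Prop := fun x => |(ones x : ℝ) - (2 * n : ℕ) * p| ≤ 2 * t with hG
  set V : (Fin (2 * n) → Bool) → ℝ := fun x => ∑ π ∈ twoToOneMaps n, pullMass p π x with hV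
  have hVnn : ∀ x, 0 ≤ V x := fun x => sum_nonneg fun π _ => pullMass_nonneg h0 h1 π x
  have hmu : ∀ x : Fin (2 * n) → Bool, 0 ≤ mu p x := mu_nonneg h0 h1
  have hwin : ∀ x k, G x → ones x = 2 * k → |(k : ℝ) - n * p| ≤ t := by
    intro x k hx hk
    simp only [hG, hk] at hx
    have : ((2 * k : ℕ) : ℝ) - (2 * n : ℕ) * p = 2 * ((k : ℝ) - n * p) := by push_cast; ring
    rw [this, abs_mul, abs_two] at hx
    linarith
  have hVle : ∀ x, G x → V x ≤ K * N * mu p x := by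
    intro x hx
    by_cases he : Even (ones x)
    · obtain ⟨k, hk⟩ := even_iff_exists_two_mul.mp he
      obtain ⟨c1, c2⟩ := hcomp k (hwin x k hx hk)
      exact (sum_pullMass_comparison hk c1 c2).1
    · have hz : V x = 0 := sum_pullMass_eq_zero p he
      rw [hz]
      have := hmu x
      positivity
  have hVge : ∀ x, G x → Even (ones x) → N * mu p x / K ≤ V x := by
    intro x hx he
    obtain ⟨k, hk⟩ := even_iff_exists_two_mul.mp he
    obtain ⟨c1, c2⟩ := hcomp k (hwin x k hx hk)
    rw [div_le_iff₀' hK]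
    exact (sum_pullMass_comparison hk c1 c2).2
  have hW : ∀ x, G x → ∀ j ∈ univ.erase i,
      pairedMass p i j x ≤ 2 * K / (lam * n) * N * mu p x := by
    intro x hx j hj
    have hc : lam * n / 2 ≤ ((univ.erase i).filter (fun k => x k = x i)).card := by
      have hm := min_ones_le_card_partners x i
      have hx' := abs_le.mp hx
      have hp1 := mul_le_mul_of_nonneg_right hp.1.le hn'.le
      have hp2 := mul_le_mul_of_nonneg_right hp.2.le hn'.le
      have hle := ones_le x
      push_cast at hx'
      rcases min_le_iff.mp hm with h | h
      · have h' : (ones x : ℝ) ≤ ((univ.erase i).filter (fun k => x k = x i)).card + 1 := by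
          exact_mod_cast h
        linarith [hx'.1]
      · have h' : (2 * n : ℝ) - ones x
            ≤ ((univ.erase i).filter (fun k => x k = x i)).card + 1 := by
          have : ((2 * n - ones x : ℕ) : ℝ)
            ≤ ((univ.erase i).filter (fun k => x k = x i)).card + 1 := by exact_mod_cast h
          rw [Nat.cast_sub hle] at this
          push_cast at this
          exact this
        linarith [hx'.2]
    have h := (card_mul_pairedMass_le h0 h1 (mem_erase.mp hj).1 x hc).trans (hVle x hx)
    have hpos : 0 < lam * n / 2 := by positivity
    refine le_of_mul_le_mul_left (h.trans (le_of_eq ?_)) hpos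
    field_simp
  have hfirst : N / K * (lam / 2 * sens p f i - n * p * (1 - p) / (2 * t ^ 2))
      ≤ ∑ x, (if f x ≠ f (bflip x i) ∧ G x then 1 else 0) * V x := by
    have he := mul_sens_le_two_mul_sum_even hl0 (by linarith [hp.1, hp.2]) hp f i
    have htail := sum_mu_tail_le (n := 2 * n) h0 h1 (t := 2 * t) (by positivity)
    have heq : (2 * n : ℕ) * p * (1 - p) / (2 * t) ^ 2 = n * p * (1 - p) / (2 * t ^ 2) := by
      push_cast; field_simp
    rw [heq] at htail
    calc _ ≤ N / K * ∑ x : Fin (2 * n) → Bool,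
          ((if f x ≠ f (bflip x i) ∧ Even (ones x) then mu p x else 0)
            - if |(ones x : ℝ) - (2 * n : ℕ) * p| ≤ 2 * t then 0 else mu p x) := by
            refine mul_le_mul_of_nonneg_left ?_ (by positivity)
            rw [sum_sub_distrib]
            linarith
      _ ≤ _ := by
            rw [mul_sum]
            refine sum_le_sum fun x _ => ?_
            have hx := hmu x
            have hNK : 0 ≤ N / K := by positivity
            have hVx := hVnn x
            by_cases hg : |(ones x : ℝ) - (2 * n : ℕ) * p| ≤ 2 * t
            · have hg' : G x := hg
              by_cases hb : Even (ones x)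
              · have := hVge x hg hb
                by_cases ha : f x ≠ f (bflip x i)
                · simp only [ha, hb, hg', hg, and_self, if_true, sub_zero, one_mul, ne_eq,
                    not_false_eq_true]
                  rwa [div_mul_eq_mul_div]
                · rw [if_neg (fun h => ha h.1), if_pos hg, if_neg (fun h => ha h.1)]
                  simp
              · simp only [hb, hg, and_false, if_false, if_true, sub_zero, mul_zero]
                split_ifs <;> simp [hVx]
            · have hg' : ¬ G x := hg
              simp only [hg, hg', and_false, if_false, zero_mul]
              refine mul_nonpos_of_nonneg_of_nonpos hNK ?_
              split_ifs <;> simp [hx]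
  have hsecond : ∑ j ∈ univ.erase i, ∑ x,
        (if f (bflip x i) ≠ f (bflip (bflip x i) j) ∧ G x then 1 else 0) * pairedMass p i j x
      ≤ N * (2 * K / (lam ^ 2 * n) * ∑ j, sens p f j) := by
    have hD : 0 ≤ 2 * K / (lam ^ 2 * n) * N := by positivity
    calc _ ≤ ∑ j ∈ univ.erase i, 2 * K / (lam ^ 2 * n) * N * sens p f j := by
          refine sum_le_sum fun j hj => ?_
          rw [sens, ← sum_comp_bflip i (fun x => if f x ≠ f (bflip x j) then mu p x else 0), mul_sum]
          refine sum_le_sum fun x _ => ?_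
          have hx := hmu (bflip x i)
          by_cases hs : f (bflip x i) ≠ f (bflip (bflip x i) j)
          · by_cases hg : G x
            · rw [if_pos ⟨hs, hg⟩, if_pos hs, one_mul]
              refine (hW x hg j hj).trans ?_
              have h3 := mul_mu_le_mu_bflip hl0 hp x i
              have h4 : 2 * K / (lam * n) * N * mu p x
                  = 2 * K / (lam ^ 2 * n) * N * (lam * mu p x) := by
                field_simp
              rw [h4]
              exact mul_le_mul_of_nonneg_left h3 hD
            · rw [if_neg (fun h => hg h.2), if_pos hs, zero_mul]
              exact mul_nonneg hD hx
          · rw [if_neg (fun h => hs h.1), if_neg hs]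
            simp
      _ ≤ ∑ j, 2 * K / (lam ^ 2 * n) * N * sens p f j :=
          sum_le_sum_of_subset_of_nonneg (erase_subset _ _)
            fun j _ _ => mul_nonneg hD (sens_nonneg h0 h1 f j)
      _ = _ := by rw [← mul_sum]; ring
  refine le_trans ?_ (sum_sens_minor_ge h0 h1 f i G)
  have e : N * ((lam / 2 * sens p f i - n * p * (1 - p) / (2 * t ^ 2)) / K
        - 2 * K / (lam ^ 2 * n) * ∑ j, sens p f j)
      = N / K * (lam / 2 * sens p f i - n * p * (1 - p) / (2 * t ^ 2))
        - N * (2 * K / (lam ^ 2 * n) * ∑ j, sens p f j) := by ring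
  rw [e]
  exact sub_le_sub hfirst hsecond

/-- A reverse Markov inequality for averages over a finite set. -/
lemma card_mul_le_card_filter_ge {α : Type*} (s : Finset α) (g : α → ℝ) {a b : ℝ} (hb : 0 ≤ b)
    (hg : ∀ x ∈ s, g x ≤ 1) (hs : s.card * a ≤ ∑ x ∈ s, g x) :
    s.card * (a - b) ≤ (s.filter (fun x => b ≤ g x)).card := by
  have h : ∑ x ∈ s, g x ≤ ∑ x ∈ s, ((if b ≤ g x then 1 else 0) + b) :=
    sum_le_sum fun x hx => by
      split_ifs with h
      · linarith [hg x hx]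
      · push Not at h
        linarith
  rw [sum_add_distrib, sum_const, nsmul_eq_mul, sum_boole] at h
  linarith

set_option maxHeartbeats 1000000 in
/-- Influence preservation under random 2-to-1 minors: for every `λ ∈ (0,1/2)` and `δ > 0`
there are `γ, τ > 0` and `n₀` such that for all `n ≥ n₀`, `p ∈ (λ,1−λ)` and
`f : {0,1}^{2n} → {0,1}` with `I^{(p)}(f) ≤ γ·n` and a coordinate `i` with
`Inf_i^{(p)}(f) ≥ δ`, a uniformly random 2-to-1 minor map `π : [2n] → [n]` satisfies
`Inf_{π(i)}^{(p)}(f^π) ≥ τ` with probability at least `τ`, where `f^π(y) = f(y ∘ π)`. -/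
theorem influence_preservation :
    ∀ lam : ℝ, lam ∈ Set.Ioo (0:ℝ) (1/2) → ∀ δ : ℝ, 0 < δ →
    ∃ γ : ℝ, 0 < γ ∧ ∃ τ : ℝ, 0 < τ ∧ ∃ n₀ : ℕ,
      ∀ n : ℕ, n₀ ≤ n → ∀ p : ℝ, p ∈ Set.Ioo lam (1 - lam) →
      ∀ f : (Fin (2*n) → Bool) → Bool, totalInf p f ≤ γ * n →
      ∀ i : Fin (2*n), δ ≤ pinf p f i →
      τ ≤ ((Finset.univ.filter (fun π : Fin (2*n) → Fin n =>
              IsTwoToOne π ∧ τ ≤ pinf p (fun y => f (y ∘ π)) (π i))).card : ℝ) /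
            ((Finset.univ.filter (fun π : Fin (2*n) → Fin n => IsTwoToOne π)).card : ℝ) := by
  intro lam hlam δ hδ
  obtain ⟨hl0, hl1⟩ := hlam
  set C : ℝ := 1 + 1 / (lam * δ) with hC
  have hinv : 0 < 1 / (lam * δ) := by positivity
  have hC1 : 1 ≤ C := by linarith
  have hCδ : 1 ≤ C ^ 2 * (lam * δ) := by
    have h : 1 / (lam * δ) * (lam * δ) = 1 := by field_simp
    have h2 : C ≤ C ^ 2 := by nlinarith
    calc 1 = 1 / (lam * δ) * (lam * δ) := h.symm
      _ ≤ C ^ 2 * (lam * δ) := by gcongr; linarith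
  obtain ⟨K, hK, hcomp⟩ := binomialMass_comparison hl0 hC1
  set η : ℝ := lam * δ / (2 * K) with hη
  have hη0 : 0 < η := by positivity
  refine ⟨lam ^ 4 * δ / (8 * K ^ 2), by positivity, lam * η / 4, by positivity,
    ⌈(2 * C / lam) ^ 2⌉₊ + ⌈2 / lam⌉₊ + 1, ?_⟩
  intro n hn p hp f hI i hi
  have h0 : 0 < p := hl0.trans hp.1
  have h1 : p < 1 := by linarith [hp.2]
  have hn0 : 0 < n := by omega
  have hn' : (0 : ℝ) < n := by exact_mod_cast hn0
  have hs0 : 0 < √(n : ℝ) := Real.sqrt_pos.mpr hn'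
  have hss : √(n : ℝ) ^ 2 = n := Real.sq_sqrt hn'.le
  have hna : (2 * C / lam) ^ 2 ≤ n :=
    (Nat.le_ceil _).trans (by exact_mod_cast (by omega : ⌈(2 * C / lam) ^ 2⌉₊ ≤ n))
  have hnb : 2 / lam ≤ n :=
    (Nat.le_ceil _).trans (by exact_mod_cast (by omega : ⌈2 / lam⌉₊ ≤ n))
  have hnl : 2 ≤ lam * n := by
    rw [div_le_iff₀ hl0] at hnb
    linarith
  have hsq : 2 * C / lam ≤ √n := Real.le_sqrt_of_sq_le hna
  have htn : C * √n ≤ lam / 2 * n := by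
    rw [div_le_iff₀ hl0] at hsq
    nlinarith
  have hpq4 : p * (1 - p) ≤ 1 / 4 := by nlinarith [sq_nonneg (2 * p - 1)]
  have hpql : lam / 2 ≤ p * (1 - p) := by nlinarith [hp.1, hp.2]
  have hpq0 : 0 < p * (1 - p) := by nlinarith
  have hsi : 4 * δ ≤ sens p f i := by
    rw [pinf_eq] at hi
    nlinarith [sens_nonneg h0.le h1.le f i]
  have hsum : ∑ j, sens p f j ≤ lam ^ 3 * δ * n / (4 * K ^ 2) := by
    have hI' : p * (1 - p) * ∑ j, sens p f j ≤ lam ^ 4 * δ / (8 * K ^ 2) * n := by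
      rw [mul_sum]
      exact hI
    have hnn : 0 ≤ ∑ j, sens p f j := sum_nonneg fun j _ => sens_nonneg h0.le h1.le f j
    have : lam / 2 * ∑ j, sens p f j ≤ lam / 2 * (lam ^ 3 * δ * n / (4 * K ^ 2)) := by
      calc _ ≤ p * (1 - p) * ∑ j, sens p f j := by gcongr
        _ ≤ _ := hI'
        _ = _ := by field_simp; ring
    exact le_of_mul_le_mul_left this (by positivity)
  have htail : n * p * (1 - p) / (2 * (C * √n) ^ 2) ≤ lam * δ := by
    rw [div_le_iff₀ (by positivity), mul_pow, hss]
    nlinarith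
  have hmain := sum_sens_minor_ge_of_comparison hl0 hK hnl hp (t := C * √n) (by positivity) htn
    (hcomp n hn0 htn p hp) f i
  have hNpos : (0 : ℝ) < (twoToOneMaps n).card := by
    exact_mod_cast (twoToOneMaps_nonempty n).card_pos
  have havg : (twoToOneMaps n).card * η
      ≤ ∑ π ∈ twoToOneMaps n, sens p (fun y => f (y ∘ π)) (π i) := by
    refine le_trans (mul_le_mul_of_nonneg_left ?_ hNpos.le) hmain
    have a1 : 2 * η ≤ (lam / 2 * sens p f i - n * p * (1 - p) / (2 * (C * √n) ^ 2)) / K := by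
      rw [le_div_iff₀ hK, hη]
      have : 2 * (lam * δ / (2 * K)) * K = lam * δ := by field_simp
      rw [this]
      nlinarith
    have a2 : 2 * K / (lam ^ 2 * n) * ∑ j, sens p f j ≤ η := by
      calc _ ≤ 2 * K / (lam ^ 2 * n) * (lam ^ 3 * δ * n / (4 * K ^ 2)) := by gcongr
        _ = η := by rw [hη]; field_simp; norm_num
    linarith
  have hmarkov := card_mul_le_card_filter_ge (twoToOneMaps n)
    (fun π => sens p (fun y => f (y ∘ π)) (π i)) (b := η / 2) (by positivity)
    (fun π _ => sens_le_one h0.le h1.le _ _) havg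
  refine (le_div_iff₀ hNpos).mpr ?_
  calc lam * η / 4 * (twoToOneMaps n).card ≤ (twoToOneMaps n).card * (η - η / 2) := by
        nlinarith [mul_pos hη0 hNpos]
    _ ≤ _ := hmarkov
    _ ≤ _ := by
        refine Nat.cast_le.mpr (card_le_card fun π hπ => ?_)
        obtain ⟨hπ1, hπ2⟩ := mem_filter.mp hπ
        refine mem_filter.mpr ⟨mem_univ _, mem_twoToOneMaps.mp hπ1, ?_⟩
        rw [pinf_eq]
        calc lam * η / 4 = lam / 2 * (η / 2) := by ring
          _ ≤ _ := by gcongr
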